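/- There are no integers x, α, β, γ, p with α ≥ 1, β ≥ 1, γ ≥ 0, and p an odd prime, satisfying 5^{2β}·p^{2γ} = 5^{2β}·x^8 + 2^{2α+1}·5^{4β−1}·x^6 + 2^{4α+1}·5^{6β−2}·x^4 + 2^{6α}·5^{8β−3}·x^2 + 2^{8α}·5^{10β−5}. -/

import Mathlib

/-!
Write `r = 2 ^ (α - 1)`, `q = 5 ^ (β - 1)`, `t = r * q`, `X = x ^ 2` and `P = p ^ γ`. Dividing by
`5 ^ (2 * β)`, the equation becomes
`P² = X⁴ + 40 t² X³ + 800 t⁴ X² + 8000 t⁶ X + 32000 t⁸`, that is `M² - P² = 8000 t⁸` with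
`M = X² + 20 t² X + 200 t⁴`. As `P` is odd, so is `x`.

If `5 ∣ x`, then `5 ∣ P`, so `P²` is a power of `5`; but the right-hand side is a power of `5` times
a number greater than `1` and prime to `5` (`no_sol_of_five_dvd`).

If `5 ∤ x`, then `M` is prime to `10`, and `(M - P) / 2` and `(M + P) / 2` are positive with sum `M`
and product `(16 r⁸) (125 q⁸)`. Each of the two prime powers lies entirely in one factor, so
`M = 1 + 2000 t⁸` or `M = 16 r⁸ + 125 q⁸`. Completing the square with `Z = X + 10 t²`:

* the second case forces `r = 1` modulo `8`, and then
  `(Z - 4) (Z + 4) = 25 q⁴ (5 q⁴ - 4)`, where `25 q⁴` divides one of the factors, which makes the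
  left-hand side too large (`no_sol_sum`);
* in the first case `Z = 2 k + 1` with `k (k + 1) = 25 S T (20 S T - 1)`, `S = r⁴`, `T = q⁴`. If `S`
  and `25 T` divide the same factor, the left-hand side is too large (`no_sol_same_factor`).
  Otherwise a divisor of a power of `2` turns up which is odd, hence `±1`, and both signs are
  impossible (`no_sol_split_factor`).
-/

lemma not_five_pow {n m : ℕ} {u : ℤ} (h : (5 : ℤ) ^ n = 5 ^ m * u) (hu : 1 < u)
    (h5 : ¬ (5 : ℤ) ∣ u) : False := by
  have hp : Prime (5 : ℤ) := by norm_num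
  have hc : IsCoprime ((5 : ℤ) ^ n) u := ((hp.coprime_iff_not_dvd).2 h5).pow_left
  have := hc.isUnit_of_dvd' (Dvd.intro_left _ h.symm) dvd_rfl
  rcases Int.isUnit_iff.1 this with h | h <;> omega

lemma two_pow_dvd_or {m : ℕ} {A B : ℤ} (h : (2 : ℤ) ^ m ∣ A * B)
    (hs : ¬ (2 : ℤ) ∣ A ∨ ¬ (2 : ℤ) ∣ B) : (2 : ℤ) ^ m ∣ A ∨ (2 : ℤ) ^ m ∣ B := by
  have hp : Prime (2 : ℤ) := Int.prime_two
  rcases hs with h' | h'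
  · exact .inr ((((hp.coprime_iff_not_dvd).2 h').pow_left).dvd_of_dvd_mul_left h)
  · exact .inl ((((hp.coprime_iff_not_dvd).2 h').pow_left).dvd_of_dvd_mul_right h)

lemma five_pow_dvd_or {m : ℕ} {A B : ℤ} (h : (5 : ℤ) ^ m ∣ A * B)
    (hs : ¬ (5 : ℤ) ∣ A ∨ ¬ (5 : ℤ) ∣ B) : (5 : ℤ) ^ m ∣ A ∨ (5 : ℤ) ^ m ∣ B := by
  have hp : Prime (5 : ℤ) := by norm_num
  rcases hs with h' | h'
  · exact .inr ((((hp.coprime_iff_not_dvd).2 h').pow_left).dvd_of_dvd_mul_left h)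
  · exact .inl ((((hp.coprime_iff_not_dvd).2 h').pow_left).dvd_of_dvd_mul_right h)

lemma eq_of_cofactors {u v A B : ℤ} (hv : 0 < v) (hA : 0 < A) (hB : 0 < B)
    (h : A * B = u * v) (huA : u ∣ A) (hvB : v ∣ B) : A = u ∧ B = v := by
  have h1 := Int.le_of_dvd hA huA
  have h2 := Int.le_of_dvd hB hvB
  constructor <;> nlinarith

/-- Two positive factors of `2 ^ m * 5 ^ n` whose sum is prime to `10` are coprime, so only two
values of their sum are possible. -/
lemma sum_of_factors {m n : ℕ} {A B : ℤ} (hA : 0 < A) (hB : 0 < B)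
    (h : A * B = 2 ^ m * 5 ^ n) (h2 : ¬ (2 : ℤ) ∣ A + B) (h5 : ¬ (5 : ℤ) ∣ A + B) :
    A + B = 1 + 2 ^ m * 5 ^ n ∨ A + B = 2 ^ m + 5 ^ n := by
  have d2 := two_pow_dvd_or (m := m) (A := A) (B := B) ⟨_, h⟩ (by omega)
  have d5 := five_pow_dvd_or (m := n) (A := A) (B := B) ⟨2 ^ m, by rw [h]; ring⟩ (by omega)
  have p2 : (0 : ℤ) < 2 ^ m := by positivity
  have p5 : (0 : ℤ) < 5 ^ n := by positivity
  have hc : IsCoprime ((2 : ℤ) ^ m) (5 ^ n) := IsCoprime.pow (by norm_num)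
  rcases d2 with d2 | d2 <;> rcases d5 with d5 | d5
  · have := eq_of_cofactors one_pos hA hB (by rw [h]; ring)
      (hc.mul_dvd d2 d5) (one_dvd _)
    left; omega
  · have := eq_of_cofactors p5 hA hB h d2 d5
    right; omega
  · have := eq_of_cofactors p5 hB hA (by rw [← h]; ring) d2 d5
    right; omega
  · have := eq_of_cofactors one_pos hB hA (by rw [mul_comm, h]; ring)
      (hc.mul_dvd d2 d5) (one_dvd _)
    left; omega

/-- The right-hand side is never a power of `5`, as it has a cofactor `> 1` prime to `5`; the two
cases are `v₅(x) ≤ b` and `v₅(x) > b`. -/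
lemma no_sol_of_five_dvd {x : ℤ} {a b n : ℕ} (hx : x ≠ 0)
    (h : (5 : ℤ) ^ n = x ^ 8 + 40 * (2 ^ a * 5 ^ b) ^ 2 * x ^ 6 + 800 * (2 ^ a * 5 ^ b) ^ 4 * x ^ 4
      + 8000 * (2 ^ a * 5 ^ b) ^ 6 * x ^ 2 + 32000 * (2 ^ a * 5 ^ b) ^ 8) : False := by
  have hp : Prime (5 : ℤ) := by norm_num
  have hf : FiniteMultiplicity (5 : ℤ) x := Int.finiteMultiplicity_iff.2 ⟨by decide, hx⟩
  obtain ⟨z, hz, hz5⟩ := hf.exists_eq_pow_mul_and_not_dvd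
  generalize multiplicity (5 : ℤ) x = e at hz
  have hr : (0 : ℤ) < 2 ^ a := by positivity
  have hr5 : ¬ (5 : ℤ) ∣ 2 ^ a := fun hd => by
    have := hp.dvd_of_dvd_pow hd
    omega
  generalize (2 : ℤ) ^ a = r at *
  have hr8 : 0 < r ^ 8 := by positivity
  rcases le_or_gt e b with hle | hlt
  · obtain ⟨c, rfl⟩ := Nat.exists_eq_add_of_le hle
    have hs : (0 : ℤ) < 5 ^ c := by positivity
    refine not_five_pow (n := n) (m := 8 * e)
      (u := z ^ 8 + 5 * (8 * (r * 5 ^ c) ^ 2 * z ^ 6 + 160 * (r * 5 ^ c) ^ 4 * z ^ 4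
      + 1600 * (r * 5 ^ c) ^ 6 * z ^ 2 + 6400 * (r * 5 ^ c) ^ 8)) ?_ ?_ ?_
    · rw [h, hz]; ring
    · have h1 : 0 < (r * 5 ^ c) ^ 8 := by positivity
      have h2 : 0 ≤ z ^ 8 + 5 * (8 * (r * 5 ^ c) ^ 2 * z ^ 6 + 160 * (r * 5 ^ c) ^ 4 * z ^ 4
        + 1600 * (r * 5 ^ c) ^ 6 * z ^ 2) := by positivity
      linarith
    · intro hd
      exact hz5 (hp.dvd_of_dvd_pow ((Int.dvd_add_left (dvd_mul_right _ _)).1 hd))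
  · obtain ⟨c, rfl⟩ := Nat.exists_eq_add_of_lt hlt
    refine not_five_pow (n := n) (m := 8 * b + 3)
      (u := 256 * r ^ 8 + 5 * (5 ^ 4 * (5 ^ c * z) ^ 8 + 40 * 5 ^ 2 * r ^ 2 * (5 ^ c * z) ^ 6
        + 800 * r ^ 4 * (5 ^ c * z) ^ 4 + 320 * r ^ 6 * (5 ^ c * z) ^ 2)) ?_ ?_ ?_
    · rw [h, hz]; ring
    · have h2 : 0 ≤ 5 * (5 ^ 4 * (5 ^ c * z) ^ 8 + 40 * 5 ^ 2 * r ^ 2 * (5 ^ c * z) ^ 6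
        + 800 * r ^ 4 * (5 ^ c * z) ^ 4 + 320 * r ^ 6 * (5 ^ c * z) ^ 2) := by positivity
      linarith
    · intro hd
      have hd' := (Int.dvd_add_left (dvd_mul_right _ _)).1 hd
      rcases hp.dvd_or_dvd hd' with h' | h'
      · omega
      · exact hr5 (hp.dvd_of_dvd_pow h')

lemma sq_mod_eight_of_odd {z : ℤ} (hz : Odd z) : z ^ 2 % 8 = 1 := by
  have := Int.eight_dvd_sq_sub_one_of_odd hz
  omega

lemma no_sol_sum {x : ℤ} {a b : ℕ} (hx : Odd x)
    (h : x ^ 4 + 20 * (2 ^ a * 5 ^ b) ^ 2 * x ^ 2 + 200 * (2 ^ a * 5 ^ b) ^ 4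
      = 16 * (2 ^ a) ^ 8 + 125 * (5 ^ b) ^ 8) : False := by
  have hx2 : x ^ 2 % 8 = 1 := sq_mod_eight_of_odd hx
  have hq2 : ((5 : ℤ) ^ b) ^ 2 % 8 = 1 :=
    sq_mod_eight_of_odd (Odd.pow (by decide))
  rcases a with _ | a
  · have hd : (5 : ℤ) ^ (4 * b + 2) ∣
        (x ^ 2 + 10 * (5 ^ b) ^ 2 - 4) * (x ^ 2 + 10 * (5 ^ b) ^ 2 + 4) := by
      refine ⟨5 * (5 ^ b) ^ 4 - 4, ?_⟩
      have : (5 : ℤ) ^ (4 * b + 2) = 25 * (5 ^ b) ^ 4 := by ring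
      rw [this]
      linear_combination h
    have e5 : (5 : ℤ) ^ (4 * b + 2) = 25 * (5 ^ b) ^ 4 := by ring
    have hq : (1 : ℤ) ≤ (5 ^ b) ^ 4 := by
      have : (0 : ℤ) < (5 ^ b) ^ 4 := by positivity
      omega
    have h' : (x ^ 2 + 10 * (5 ^ b) ^ 2) ^ 2
        = 16 + 25 * (5 ^ b) ^ 4 * (5 * (5 ^ b) ^ 4 - 4) := by linear_combination h
    have hd' := five_pow_dvd_or hd (by omega)
    rw [e5] at hd'
    generalize ((5 : ℤ) ^ b) ^ 4 = Q at *
    generalize x ^ 2 + 10 * ((5 : ℤ) ^ b) ^ 2 = Z at *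
    have key : ∀ m s : ℤ, m * (8 * s + 25 * Q * m) = 5 * Q - 4 → s = 1 ∨ s = -1 → False := by
      intro m s hm hs
      rcases lt_trichotomy m 0 with h0 | h0 | h0
      · rcases hs with rfl | rfl <;> nlinarith [mul_nonneg (by linarith : 0 ≤ Q - 1)
          (by nlinarith : 0 ≤ m ^ 2 - 1)]
      · subst h0; omega
      · rcases hs with rfl | rfl <;> nlinarith [mul_nonneg (by linarith : 0 ≤ Q - 1)
          (by nlinarith : 0 ≤ m ^ 2 - 1)]
    have hQ : (25 * Q) ≠ 0 := by omega
    rcases hd' with ⟨m, hm⟩ | ⟨m, hm⟩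
    · refine key m 1 (mul_left_cancel₀ hQ ?_) (.inl rfl)
      have : Z = 25 * Q * m + 4 := by linarith
      subst this; linear_combination h'
    · refine key m (-1) (mul_left_cancel₀ hQ ?_) (.inr rfl)
      have : Z = 25 * Q * m - 4 := by linarith
      subst this; linear_combination h'
  · -- For even `r` the two sides are `1` and `5` modulo `8`.
    have e1 : x ^ 4 % 8 = 1 := by
      rw [show x ^ 4 = x ^ 2 * x ^ 2 by ring, Int.mul_emod, hx2]; rfl
    have e2 : ((5 : ℤ) ^ b) ^ 8 % 8 = 1 := by
      rw [show ((5 : ℤ) ^ b) ^ 8 = ((5 ^ b) ^ 2) ^ 4 by ring, ← Int.emod_emod_of_dvd _ (dvd_refl 8),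
        Int.ModEq.pow 4 (show ((5 : ℤ) ^ b) ^ 2 ≡ 1 [ZMOD 8] from hq2)]; rfl
    have h' : x ^ 4 + 8 * (10 * (2 ^ a * 5 ^ b) ^ 2 * x ^ 2 + 400 * (2 ^ a * 5 ^ b) ^ 4
      - 512 * (2 ^ a) ^ 8) = 125 * (5 ^ b) ^ 8 := by
      rw [pow_succ] at h; linear_combination h
    omega

lemma no_sol_same_factor {N m : ℤ} (hN : 1 ≤ N) (h : m * (25 * N * m + 1) = 20 * N - 1) :
    False := by
  rcases lt_trichotomy m 0 with h0 | h0 | h0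
  · nlinarith [mul_nonneg (by linarith : 0 ≤ N - 1) (by nlinarith : 0 ≤ m ^ 2 - 1)]
  · subst h0; omega
  · nlinarith [mul_nonneg (by linarith : 0 ≤ N - 1) (by nlinarith : 0 ≤ m ^ 2 - 1)]

/-- With `κ = 5 u² - 4 S²`, eliminating `v` and then `u` gives
`S² + 50 S T κ + 125 T² κ² = κ`. So the odd number `κ` divides the power of two `S²`, whence
`κ = ±1`; the sign `+` fails by size and the sign `-` fails modulo `5`. -/
lemma no_sol_split_factor {a : ℕ} {S T u v : ℤ} (hS : S = 16 ^ a) (hT : 1 ≤ T)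
    (h1 : S * v = 25 * T * u + 1) (h2 : u * v = 20 * S * T - 1) : False := by
  have hS0 : 0 < S := by rw [hS]; positivity
  have hS5 : S ≡ 1 [ZMOD 5] := by
    rw [hS]; simpa using (show (16 : ℤ) ≡ 1 [ZMOD 5] by decide).pow a
  have hu : u % 2 = 1 := by
    by_contra hne
    obtain ⟨w, rfl⟩ : (2 : ℤ) ∣ u := by omega
    have : 2 * (w * v) = 2 * (10 * S * T) - 1 := by linear_combination h2
    omega
  obtain ⟨κ, hκ⟩ : ∃ κ, κ = 5 * u ^ 2 - 4 * S ^ 2 := ⟨_, rfl⟩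
  have hu' : u = -S - 5 * T * κ := by
    rw [hκ]; linear_combination S * h2 - u * h1
  have hq : S ^ 2 + 50 * S * T * κ + 125 * T ^ 2 * κ ^ 2 - κ = 0 := by
    rw [hu'] at hκ; linear_combination -hκ
  have hodd : ¬ (2 : ℤ) ∣ κ := by
    intro hd
    have hd2 : (2 : ℤ) ∣ 5 * u ^ 2 := by
      have : 5 * u ^ 2 = κ + 2 * (2 * S ^ 2) := by rw [hκ]; ring
      rw [this]; exact dvd_add hd (dvd_mul_right _ _)
    rcases Int.prime_two.dvd_or_dvd hd2 with h | h
    · omega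
    · have := Int.prime_two.dvd_of_dvd_pow h
      omega
  have hdvd : κ ∣ (2 : ℤ) ^ (8 * a) := by
    refine ⟨1 - 50 * S * T - 125 * T ^ 2 * κ, ?_⟩
    have : (2 : ℤ) ^ (8 * a) = S ^ 2 := by
      rw [hS, ← pow_mul, show (16 : ℤ) = 2 ^ 4 by norm_num, ← pow_mul]; ring_nf
    rw [this]; linear_combination hq
  have hunit : IsUnit κ := by
    have hc : IsCoprime ((2 : ℤ) ^ (8 * a)) κ :=
      ((Int.prime_two.coprime_iff_not_dvd).2 hodd).pow_left
    exact hc.isUnit_of_dvd' hdvd dvd_rfl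
  rcases Int.isUnit_iff.1 hunit with h | h
  · rw [h] at hq; nlinarith [mul_pos hS0 (by linarith : 0 < T)]
  · rw [h] at hq
    have hS2 : S ^ 2 % 5 = 1 := by
      have := hS5.pow 2
      simpa [Int.ModEq] using this
    have : S ^ 2 = 5 * (10 * (S * T) - 25 * T ^ 2) - 1 := by linear_combination hq
    omega

lemma no_sol_one_add {x : ℤ} {a b : ℕ} (hx : Odd x)
    (h : x ^ 4 + 20 * (2 ^ a * 5 ^ b) ^ 2 * x ^ 2 + 200 * (2 ^ a * 5 ^ b) ^ 4
      = 1 + 2000 * (2 ^ a * 5 ^ b) ^ 8) : False := by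
  obtain ⟨j, hj⟩ := hx.pow (n := 2)
  obtain ⟨k, hk⟩ : ∃ k, k = j + 5 * ((2 : ℤ) ^ a * 5 ^ b) ^ 2 := ⟨_, rfl⟩
  obtain ⟨S, hS⟩ : ∃ S : ℤ, S = 16 ^ a := ⟨_, rfl⟩
  obtain ⟨T, hT⟩ : ∃ T : ℤ, T = 625 ^ b := ⟨_, rfl⟩
  have hS1 : 0 < S := by rw [hS]; positivity
  have hT1 : 0 < T := by rw [hT]; positivity
  have e2 : (2 : ℤ) ^ (4 * a) = S := by rw [hS, pow_mul]; norm_num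
  have e5 : (5 : ℤ) ^ (4 * b + 2) = 25 * T := by rw [hT, pow_add, pow_mul]; norm_num; ring
  have et : ((2 : ℤ) ^ a * 5 ^ b) ^ 4 = S * T := by
    rw [mul_pow, ← pow_mul, ← pow_mul, mul_comm a, mul_comm b, e2, hT, pow_mul]; norm_num
  have hkk : k * (k + 1) = 25 * (S * T) * (20 * (S * T) - 1) := by
    have hZ : x ^ 2 + 10 * ((2 : ℤ) ^ a * 5 ^ b) ^ 2 = 2 * k + 1 := by rw [hk, hj]; ring
    have h4 : (2 * k + 1) ^ 2 = 1 + 4 * (25 * (S * T) * (20 * (S * T) - 1)) := by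
      rw [← hZ, ← et]; linear_combination h
    linarith
  have hST : 1 ≤ S * T := mul_pos hS1 hT1
  have hc : IsCoprime S (25 * T) := by
    rw [← e2, ← e5]; exact IsCoprime.pow (by norm_num)
  clear hk
  -- The substitution `k ↦ -1 - k` allows assuming that `25 T` divides `k`.
  have main : ∀ k : ℤ, k * (k + 1) = 25 * (S * T) * (20 * (S * T) - 1) → 25 * T ∣ k → False := by
    intro k hkk hk5
    have hd2 : S ∣ k ∨ S ∣ k + 1 := by
      rw [← e2]
      refine two_pow_dvd_or ?_ (by omega)
      rw [e2, hkk]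
      exact ⟨25 * T * (20 * (S * T) - 1), by ring⟩
    rcases hd2 with hd2 | ⟨v, hv⟩
    · obtain ⟨m, rfl⟩ := hc.mul_dvd hd2 hk5
      refine no_sol_same_factor (m := m) hST ?_
      refine mul_left_cancel₀ (by positivity : 25 * (S * T) ≠ 0) ?_
      linear_combination hkk
    · obtain ⟨u, rfl⟩ := hk5
      refine no_sol_split_factor (u := u) (v := v) hS hT1 hv.symm ?_
      refine mul_left_cancel₀ (by positivity : 25 * (S * T) ≠ 0) ?_
      rw [hv] at hkk
      linear_combination hkk
  have hd5 : 25 * T ∣ k ∨ 25 * T ∣ k + 1 := by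
    rw [← e5]
    refine five_pow_dvd_or ?_ (by omega)
    rw [e5, hkk]
    exact ⟨S * (20 * (S * T) - 1), by ring⟩
  rcases hd5 with hd | hd
  · exact main k hkk hd
  · refine main (-(k + 1)) (by linear_combination hkk) ((dvd_neg).2 hd)

theorem stmt_7 :
    ¬ ∃ (x p : ℤ) (α β γ : ℕ), 1 ≤ α ∧ 1 ≤ β ∧ Prime p ∧ Odd p ∧
      5 ^ (2 * β) * p ^ (2 * γ) =
        5 ^ (2 * β) * x ^ 8 + 2 ^ (2 * α + 1) * 5 ^ (4 * β - 1) * x ^ 6 +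
        2 ^ (4 * α + 1) * 5 ^ (6 * β - 2) * x ^ 4 +
        2 ^ (6 * α) * 5 ^ (8 * β - 3) * x ^ 2 +
        2 ^ (8 * α) * 5 ^ (10 * β - 5) := by
  rintro ⟨x, p, α, β, γ, hα, hβ, hp, hodd, h⟩
  obtain ⟨a, rfl⟩ := Nat.exists_eq_add_of_le' hα
  obtain ⟨b, rfl⟩ := Nat.exists_eq_add_of_le' hβ
  rw [show 4 * (b + 1) - 1 = 4 * b + 3 by omega, show 6 * (b + 1) - 2 = 6 * b + 4 by omega,
    show 8 * (b + 1) - 3 = 8 * b + 5 by omega, show 10 * (b + 1) - 5 = 10 * b + 5 by omega] at h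
  have hred : p ^ (2 * γ) = x ^ 8 + 40 * (2 ^ a * 5 ^ b) ^ 2 * x ^ 6
      + 800 * (2 ^ a * 5 ^ b) ^ 4 * x ^ 4
      + 8000 * (2 ^ a * 5 ^ b) ^ 6 * x ^ 2 + 32000 * (2 ^ a * 5 ^ b) ^ 8 := by
    refine mul_left_cancel₀ (by positivity : (5 : ℤ) ^ (2 * (b + 1)) ≠ 0) ?_
    rw [h]; ring
  have hP : Odd (p ^ γ) := hodd.pow
  have hxodd : Odd x := by
    by_contra hne
    obtain ⟨z, hz⟩ := even_iff_two_dvd.1 (Int.not_odd_iff_even.1 hne)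
    have h2 : Odd (p ^ (2 * γ)) := hodd.pow
    rw [hred, hz] at h2
    refine (Int.not_odd_iff_even.2 (even_iff_two_dvd.2 ?_)) h2
    exact ⟨128 * z ^ 8 + 20 * (2 ^ a * 5 ^ b) ^ 2 * (2 * z) ^ 6
      + 400 * (2 ^ a * 5 ^ b) ^ 4 * (2 * z) ^ 4
      + 4000 * (2 ^ a * 5 ^ b) ^ 6 * (2 * z) ^ 2 + 16000 * (2 ^ a * 5 ^ b) ^ 8, by ring⟩
  have hx0 : x ≠ 0 := by rintro rfl; exact absurd hxodd (by decide)
  have p5 : Prime (5 : ℤ) := by norm_num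
  by_cases hx5 : (5 : ℤ) ∣ x
  · have hd : (5 : ℤ) ∣ p ^ (2 * γ) := by
      obtain ⟨z, rfl⟩ := hx5
      rw [hred]
      exact ⟨5 ^ 7 * z ^ 8 + 8 * (2 ^ a * 5 ^ b) ^ 2 * (5 * z) ^ 6
        + 160 * (2 ^ a * 5 ^ b) ^ 4 * (5 * z) ^ 4
        + 1600 * (2 ^ a * 5 ^ b) ^ 6 * (5 * z) ^ 2 + 6400 * (2 ^ a * 5 ^ b) ^ 8, by ring⟩
    have hass := (p5.associated_of_dvd hp (p5.dvd_of_dvd_pow hd))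
    have hpow : p ^ (2 * γ) = 5 ^ (2 * γ) := by
      rcases Int.associated_iff.1 hass with h' | h'
      · rw [← h']
      · rw [pow_mul, pow_mul, h']; simp
    rw [hpow] at hred
    exact no_sol_of_five_dvd hx0 hred
  · obtain ⟨M, hM⟩ : ∃ M, M = x ^ 4 + 20 * (2 ^ a * 5 ^ b) ^ 2 * x ^ 2
      + 200 * (2 ^ a * 5 ^ b) ^ 4 := ⟨_, rfl⟩
    have hMpos : 0 < M := by rw [hM]; positivity
    have hM2 : Odd M := by
      have hx4 : Odd (x ^ 4) := hxodd.pow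
      have : M = x ^ 4 + 2 * (10 * (2 ^ a * 5 ^ b) ^ 2 * x ^ 2 + 100 * (2 ^ a * 5 ^ b) ^ 4) := by
        rw [hM]; ring
      rw [this]; exact hx4.add_even (even_two_mul _)
    have hM5 : ¬ (5 : ℤ) ∣ M := by
      have : M = x ^ 4 + 5 * (4 * (2 ^ a * 5 ^ b) ^ 2 * x ^ 2 + 40 * (2 ^ a * 5 ^ b) ^ 4) := by
        rw [hM]; ring
      rw [this]
      intro hd
      exact hx5 (p5.dvd_of_dvd_pow ((Int.dvd_add_left (dvd_mul_right _ _)).1 hd))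
    have hMP : M ^ 2 - (p ^ γ) ^ 2 = 8000 * (2 ^ a * 5 ^ b) ^ 8 := by
      rw [← pow_mul, mul_comm γ, hred, hM]; ring
    obtain ⟨A, hA⟩ := even_iff_two_dvd.1 (hM2.sub_odd hP)
    obtain ⟨B, hB⟩ := even_iff_two_dvd.1 (hM2.add_odd hP)
    have hAB : A * B = 2 ^ (8 * a + 4) * 5 ^ (8 * b + 3) := by
      have : 4 * (A * B) = 8000 * (2 ^ a * 5 ^ b) ^ 8 := by
        rw [← hMP]; linear_combination (-(M + p ^ γ)) * hA - 2 * A * hB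
      refine mul_left_cancel₀ (by norm_num : (4 : ℤ) ≠ 0) ?_
      rw [this]; ring
    have hABM : A + B = M := by linarith
    have hABpos : 0 < A * B := by rw [hAB]; positivity
    have hpos : 0 < A ∧ 0 < B := by
      rcases mul_pos_iff.1 hABpos with h' | h'
      · exact h'
      · omega
    have hM2' : ¬ (2 : ℤ) ∣ A + B := by
      rw [hABM, ← even_iff_two_dvd, Int.not_even_iff_odd]; exact hM2
    rcases sum_of_factors hpos.1 hpos.2 hAB hM2' (by rwa [hABM]) with h' | h'
    · refine no_sol_one_add (a := a) (b := b) hxodd ?_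
      rw [← hM, ← hABM, h']; ring
    · refine no_sol_sum (a := a) (b := b) hxodd ?_
      rw [← hM, ← hABM, h']; ring
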